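/- Let ℓ be a prime number and let V and V' be two-dimensional vector spaces over the finite field F_ℓ. Let Δ be a subgroup of GL(V) × GL(V'), and let G ≤ GL(V) and G' ≤ GL(V') be the images of Δ under the two projection homomorphisms. Assume that one of the groups G, G' is Hasse and that the other is not contained in a Borel subgroup (i.e., no line of its space is invariant under all of its elements). Then Δ, acting block-diagonally on V × V', is Hasse: every element (g, g') ∈ Δ has an eigenvector in V × V', and no line of V × V' is invariant under all elements of Δ. -/

import Mathlib

/-- A subgroup `G` of `GL(V)` is *Hasse* if every element of `G` has an eigenvector in `V`
(equivalently, its image in `PGL(V)` fixes a point of `P(V)`), but no line of `V` is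
invariant under all of `G`. -/
def IsHasseSubgroup {k V : Type*} [Field k] [AddCommGroup V] [Module k V]
    (G : Subgroup (LinearMap.GeneralLinearGroup k V)) : Prop :=
  (∀ g ∈ G, ∃ v : V, v ≠ 0 ∧ ∃ c : k, g.val v = c • v) ∧
    ¬∃ v : V, v ≠ 0 ∧ ∀ g ∈ G,
      Submodule.map g.val (Submodule.span k {v}) = Submodule.span k {v}

/-- A subgroup `G` of `GL(V)` is contained in a Borel subgroup iff some line of `V` is
invariant under all of `G`. -/
def ContainedInBorel {k V : Type*} [Field k] [AddCommGroup V] [Module k V]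
    (G : Subgroup (LinearMap.GeneralLinearGroup k V)) : Prop :=
  ∃ v : V, v ≠ 0 ∧ ∀ g ∈ G,
    Submodule.map g.val (Submodule.span k {v}) = Submodule.span k {v}

/-- If `Δ ≤ GL(V) × GL(V')` has projections `G`, `G'`, one of which is Hasse while the other
is not contained in a Borel subgroup, then `Δ`, acting block-diagonally on `V × V'`, is Hasse:
every element of `Δ` has an eigenvector in `V × V'`, and no line of `V × V'` is invariant
under all of `Δ`. -/
theorem stmt0 (ℓ : ℕ) [Fact ℓ.Prime] (V V' : Type*)
    [AddCommGroup V] [Module (ZMod ℓ) V] [AddCommGroup V'] [Module (ZMod ℓ) V']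
    (hV : Module.finrank (ZMod ℓ) V = 2) (hV' : Module.finrank (ZMod ℓ) V' = 2)
    (Δ : Subgroup
      (LinearMap.GeneralLinearGroup (ZMod ℓ) V × LinearMap.GeneralLinearGroup (ZMod ℓ) V'))
    (G : Subgroup (LinearMap.GeneralLinearGroup (ZMod ℓ) V))
    (G' : Subgroup (LinearMap.GeneralLinearGroup (ZMod ℓ) V'))
    (hG : G = Subgroup.map (MonoidHom.fst _ _) Δ)
    (hG' : G' = Subgroup.map (MonoidHom.snd _ _) Δ)
    (h : (IsHasseSubgroup G ∧ ¬ContainedInBorel G') ∨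
         (IsHasseSubgroup G' ∧ ¬ContainedInBorel G)) :
    (∀ p ∈ Δ, ∃ w : V × V', w ≠ 0 ∧ ∃ c : ZMod ℓ,
        LinearMap.prodMap p.1.val p.2.val w = c • w) ∧
      ¬∃ w : V × V', w ≠ 0 ∧ ∀ p ∈ Δ,
        Submodule.map (LinearMap.prodMap p.1.val p.2.val)
            (Submodule.span (ZMod ℓ) {w}) = Submodule.span (ZMod ℓ) {w} := by
  have key1 : ¬ContainedInBorel G → ∀ w : V × V', (∀ p ∈ Δ,
        Submodule.map (LinearMap.prodMap p.1.val p.2.val)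
            (Submodule.span (ZMod ℓ) {w}) = Submodule.span (ZMod ℓ) {w}) → w.1 = 0 := by
    intro hB w hw
    by_contra h0
    refine hB ⟨w.1, h0, ?_⟩
    intro g hg
    rw [hG] at hg
    obtain ⟨p, hp, rfl⟩ := hg
    have := congrArg (Submodule.map (LinearMap.fst (ZMod ℓ) V V')) (hw p hp)
    simpa [Submodule.map_span, Set.image_singleton] using this
  have key2 : ¬ContainedInBorel G' → ∀ w : V × V', (∀ p ∈ Δ,
        Submodule.map (LinearMap.prodMap p.1.val p.2.val)
            (Submodule.span (ZMod ℓ) {w}) = Submodule.span (ZMod ℓ) {w}) → w.2 = 0 := by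
    intro hB w hw
    by_contra h0
    refine hB ⟨w.2, h0, ?_⟩
    intro g hg
    rw [hG'] at hg
    obtain ⟨p, hp, rfl⟩ := hg
    have := congrArg (Submodule.map (LinearMap.snd (ZMod ℓ) V V')) (hw p hp)
    simpa [Submodule.map_span, Set.image_singleton] using this
  have hB : ¬ContainedInBorel G ∧ ¬ContainedInBorel G' := by
    rcases h with ⟨h1, h2⟩ | ⟨h1, h2⟩
    · exact ⟨h1.2, h2⟩
    · exact ⟨h2, h1.2⟩
  refine ⟨?_, ?_⟩
  · intro p hp
    rcases h with ⟨h1, -⟩ | ⟨h1, -⟩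
    · obtain ⟨v, hv, c, hc⟩ := h1.1 p.1 (by rw [hG]; exact ⟨p, hp, rfl⟩)
      refine ⟨(v, 0), fun h => hv (congrArg Prod.fst h), c, ?_⟩
      ext <;> simp [hc]
    · obtain ⟨v, hv, c, hc⟩ := h1.1 p.2 (by rw [hG']; exact ⟨p, hp, rfl⟩)
      refine ⟨(0, v), fun h => hv (congrArg Prod.snd h), c, ?_⟩
      ext <;> simp [hc]
  · rintro ⟨w, hw0, hw⟩
    exact hw0 (Prod.ext (key1 hB.1 w hw) (key2 hB.2 w hw))
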